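/- Relative entropy identity: Let ψ̂ be C³ on ℝ^{19} × (0,∞) with η̂, ê defined as in the constitutive theory. Let U = (ξ, v, θ) and Ū = (ξ̄, v̄, θ̄) be C² solutions, with θ, θ̄ > 0, of the augmented thermoviscoelasticity system with respective C¹ viscous stress, heat flux and supply fields (Z, Q, r) and (Z̄, Q̄, r̄), each satisfying its entropy identity ∂_t η̂ − ∂_α(Q_α/θ) = ∇θ·Q/θ² + (∂_α v_i)Z_{iα}/θ + r/θ (and similarly for the barred solution). Then the following identity holds pointwise: ∂_t[ ψ̂(ξ,θ|ξ̄,θ̄) + ½|v − v̄|² + (η̂(ξ,θ) − η̂(ξ̄,θ̄))(θ − θ̄) ] − ∂_α[ ((∂ψ̂/∂ξ^B)(ξ,θ) − (∂ψ̂/∂ξ^B)(ξ̄,θ̄)) (∂Φ^B/∂F_{iα})(F) (v_i − v̄_i) + (Z_{iα} − Z̄_{iα})(v_i − v̄_i) + (θ − θ̄)(Q_α/θ − Q̄_α/θ̄) ] = −(∂_t θ̄) η̂(ξ,θ|ξ̄,θ̄) + (∂_t ξ̄^B) (∂ψ̂/∂ξ^B)(ξ,θ|ξ̄,θ̄) +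 ∂_α[(∂ψ̂/∂ξ^B)(ξ̄,θ̄)] ((∂Φ^B/∂F_{iα})(F) − (∂Φ^B/∂F_{iα})(F̄))(v_i − v̄_i) + (∂_α v̄_i) ((∂ψ̂/∂ξ^B)(ξ,θ) − (∂ψ̂/∂ξ^B)(ξ̄,θ̄)) ((∂Φ^B/∂F_{iα})(F) − (∂Φ^B/∂F_{iα})(F̄)) − θθ̄ ((∂_α v_i)/θ − (∂_α v̄_i)/θ̄)(Z_{iα}/θ − Z̄_{iα}/θ̄) − (θ̄ Q/θ − θ Q̄/θ̄)·(∇θ/θ − ∇θ̄/θ̄) + (θ − θ̄)(r/θ − r̄/θ̄), with summation over repeated indices B, i, α. -/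

import Mathlib

open Real MeasureTheory Filter Set Topology ENNReal NNReal

noncomputable section

abbrev Vec3 := Fin 3 → ℝ
abbrev Mat3 := Fin 3 → Fin 3 → ℝ
abbrev Xi := Mat3 × Mat3 × ℝ
abbrev Idx := (Fin 3 × Fin 3) ⊕ ((Fin 3 × Fin 3) ⊕ Unit)
abbrev FullState := Xi × Vec3 × ℝ

/-- Levi-Civita symbol on three indices. -/
def eps3 (i j k : Fin 3) : ℝ :=
  if (i, j, k) = (0, 1, 2) ∨ (i, j, k) = (1, 2, 0) ∨ (i, j, k) = (2, 0, 1) then 1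
  else if (i, j, k) = (2, 1, 0) ∨ (i, j, k) = (1, 0, 2) ∨ (i, j, k) = (0, 2, 1) then -1
  else 0

/-- Cofactor matrix (cof F)_{iα} = (1/2) ε_{ijk} ε_{αβγ} F_{jβ} F_{kγ}. -/
def cof3 (F : Mat3) : Mat3 := fun i α =>
  (1/2) * ∑ j, ∑ k, ∑ β, ∑ γ, eps3 i j k * eps3 α β γ * F j β * F k γ

/-- det F = (1/6) ε_{ijk} ε_{αβγ} F_{iα} F_{jβ} F_{kγ}. -/
def det3 (F : Mat3) : ℝ :=
  (1/6) * ∑ i, ∑ j, ∑ k, ∑ α, ∑ β, ∑ γ,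
    eps3 i j k * eps3 α β γ * F i α * F j β * F k γ

/-- The vector of null Lagrangians Φ(F) = (F, cof F, det F). -/
def Phi3 (F : Mat3) : Xi := (F, cof3 F, det3 F)

/-- Component ξ^B of ξ ∈ ℝ^19. -/
def xiComp (ξ : Xi) : Idx → ℝ
  | .inl (i, α) => ξ.1 i α
  | .inr (.inl (i, α)) => ξ.2.1 i α
  | .inr (.inr _) => ξ.2.2

def updMat (F : Mat3) (i α : Fin 3) (s : ℝ) : Mat3 :=
  Function.update F i (Function.update (F i) α s)

/-- Update component B of ξ to value s. -/
def xiUpd (ξ : Xi) : Idx → ℝ → Xi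
  | .inl (i, α), s => (updMat ξ.1 i α s, ξ.2)
  | .inr (.inl (i, α)), s => (ξ.1, updMat ξ.2.1 i α s, ξ.2.2)
  | .inr (.inr _), s => (ξ.1, ξ.2.1, s)

/-- ∂Φ^B/∂F_{iα}(F). -/
def dPhi (B : Idx) (i α : Fin 3) (F : Mat3) : ℝ :=
  deriv (fun s => xiComp (Phi3 (updMat F i α s)) B) (F i α)

/-- Partial derivative ∂ψ̂/∂ξ^B of a function ψ̂(ξ, θ). -/
def dXi (B : Idx) (ψ : Xi → ℝ → ℝ) (ξ : Xi) (θ : ℝ) : ℝ :=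
  deriv (fun s => ψ (xiUpd ξ B s) θ) (xiComp ξ B)

/-- Partial derivative ∂ψ̂/∂θ. -/
def dTh (ψ : Xi → ℝ → ℝ) (ξ : Xi) (θ : ℝ) : ℝ :=
  deriv (fun s => ψ ξ s) θ

/-- η̂(ξ,θ) = −∂_θ ψ̂(ξ,θ). -/
def etaHat (ψ : Xi → ℝ → ℝ) (ξ : Xi) (θ : ℝ) : ℝ := -(dTh ψ ξ θ)

/-- ê(ξ,θ) = ψ̂(ξ,θ) − θ ∂_θ ψ̂(ξ,θ). -/
def eHat (ψ : Xi → ℝ → ℝ) (ξ : Xi) (θ : ℝ) : ℝ := ψ ξ θ - θ * dTh ψ ξ θ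

/-- Spatial partial derivative ∂_α of a space-time field. -/
def pdx (α : Fin 3) (f : Vec3 → ℝ → ℝ) (x : Vec3) (t : ℝ) : ℝ :=
  deriv (fun s => f (Function.update x α s) t) (x α)

/-- Time derivative ∂_t of a space-time field. -/
def pdt (f : Vec3 → ℝ → ℝ) (x : Vec3) (t : ℝ) : ℝ :=
  deriv (fun s => f x s) t

def mnorm (F : Mat3) : ℝ := Real.sqrt (∑ i, ∑ j, (F i j)^2)
def vnorm (v : Vec3) : ℝ := Real.sqrt (∑ i, (v i)^2)

/-- |ξ|_{p,q,r} = |F|^p + |ζ|^q + |w|^r. -/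
def xiNorm (p q r : ℝ) (ξ : Xi) : ℝ :=
  mnorm ξ.1 ^ p + mnorm ξ.2.1 ^ q + |ξ.2.2| ^ r

/-- The compact set Γ_{M,δ}. -/
def Gamma (M δ : ℝ) : Set FullState :=
  {U | mnorm U.1.1 ≤ M ∧ mnorm U.1.2.1 ≤ M ∧ |U.1.2.2| ≤ M ∧
       vnorm U.2.1 ≤ M ∧ δ ≤ U.2.2 ∧ U.2.2 ≤ M}

/-- Relative free energy ψ̂(ξ,θ|ξ̄,θ̄). -/
def psiRel (ψ : Xi → ℝ → ℝ) (ξ : Xi) (θ : ℝ) (ξ' : Xi) (θ' : ℝ) : ℝ :=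
  ψ ξ θ - ψ ξ' θ' - (∑ B : Idx, dXi B ψ ξ' θ' * (xiComp ξ B - xiComp ξ' B))
    + etaHat ψ ξ' θ' * (θ - θ')

/-- Relative entropy function η̂(ξ,θ|ξ̄,θ̄). -/
def etaRel (ψ : Xi → ℝ → ℝ) (ξ : Xi) (θ : ℝ) (ξ' : Xi) (θ' : ℝ) : ℝ :=
  etaHat ψ ξ θ - etaHat ψ ξ' θ'
    - (∑ B : Idx, dXi B (etaHat ψ) ξ' θ' * (xiComp ξ B - xiComp ξ' B))
    - dTh (etaHat ψ) ξ' θ' * (θ - θ')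

/-- Relative stress (∂ψ̂/∂ξ^B)(ξ,θ|ξ̄,θ̄). -/
def dXiRel (B : Idx) (ψ : Xi → ℝ → ℝ) (ξ : Xi) (θ : ℝ) (ξ' : Xi) (θ' : ℝ) : ℝ :=
  dXi B ψ ξ θ - dXi B ψ ξ' θ'
    - (∑ A : Idx, dXi A (dXi B ψ) ξ' θ' * (xiComp ξ A - xiComp ξ' A))
    - dTh (dXi B ψ) ξ' θ' * (θ - θ')

/-- Relative entropy I(ξ,v,θ|ξ̄,v̄,θ̄). -/
def relEnt (ψ : Xi → ℝ → ℝ) (ξ : Xi) (v : Vec3) (θ : ℝ)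
    (ξ' : Xi) (v' : Vec3) (θ' : ℝ) : ℝ :=
  psiRel ψ ξ θ ξ' θ' + (1/2) * (∑ i, (v i - v' i)^2)
    + (etaHat ψ ξ θ - etaHat ψ ξ' θ') * (θ - θ')

/-- ψ̂ is C³ on ℝ^19 × (0,∞). -/
def PsiC3 (ψ : Xi → ℝ → ℝ) : Prop :=
  ContDiffOn ℝ 3 (fun p : Xi × ℝ => ψ p.1 p.2) (Set.univ ×ˢ Set.Ioi (0:ℝ))

/-- ∇²_ξ ψ̂ > 0 and ∂_θ η̂ > 0. -/
def PsiConvex (ψ : Xi → ℝ → ℝ) : Prop :=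
  ∀ ξ : Xi, ∀ θ : ℝ, 0 < θ →
    (∀ u : Idx → ℝ, u ≠ 0 →
      0 < ∑ A : Idx, ∑ B : Idx, dXi A (dXi B ψ) ξ θ * u A * u B) ∧
    0 < dTh (etaHat ψ) ξ θ

def gradFnorm (ψ : Xi → ℝ → ℝ) (ξ : Xi) (θ : ℝ) : ℝ :=
  Real.sqrt (∑ i, ∑ α, (dXi (.inl (i, α)) ψ ξ θ)^2)
def gradZnorm (ψ : Xi → ℝ → ℝ) (ξ : Xi) (θ : ℝ) : ℝ :=
  Real.sqrt (∑ i, ∑ α, (dXi (.inr (.inl (i, α))) ψ ξ θ)^2)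
def gradWnorm (ψ : Xi → ℝ → ℝ) (ξ : Xi) (θ : ℝ) : ℝ :=
  |dXi (.inr (.inr ())) ψ ξ θ|

/-- The growth conditions (gr.con.1)-(gr.con.3). -/
def GrowthCond (ψ : Xi → ℝ → ℝ) (c p q r ℓ : ℝ) : Prop :=
  0 < c ∧
  (∀ ξ : Xi, ∀ θ : ℝ, 0 < θ →
    c * (xiNorm p q r ξ + θ ^ ℓ) - c ≤ eHat ψ ξ θ ∧
    eHat ψ ξ θ ≤ c * (xiNorm p q r ξ + θ ^ ℓ) + c) ∧
  (∀ ε : ℝ, 0 < ε → ∃ R : ℝ, ∀ ξ : Xi, ∀ θ : ℝ, 0 < θ →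
    R < xiNorm p q r ξ + θ ^ ℓ →
    gradFnorm ψ ξ θ + gradZnorm ψ ξ θ ^ (p/(p-1)) + gradWnorm ψ ξ θ ^ (p/(p-2))
      ≤ ε * (xiNorm p q r ξ + θ ^ ℓ)) ∧
  (∀ ε : ℝ, 0 < ε → ∃ R : ℝ, ∀ ξ : Xi, ∀ θ : ℝ, 0 < θ →
    R < xiNorm p q r ξ + θ ^ ℓ →
    |dTh ψ ξ θ| ≤ ε * (xiNorm p q r ξ + θ ^ ℓ))

/-- The augmented thermoviscoelasticity system with fields (Z, Q, r), at a point (x,t). -/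
def AugSys (ψ : Xi → ℝ → ℝ) (ξf : Vec3 → ℝ → Xi) (vf : Vec3 → ℝ → Vec3)
    (θf : Vec3 → ℝ → ℝ) (Z : Vec3 → ℝ → Mat3) (Q : Vec3 → ℝ → Vec3)
    (r : Vec3 → ℝ → ℝ) (x : Vec3) (t : ℝ) : Prop :=
  (∀ B : Idx, pdt (fun y s => xiComp (ξf y s) B) x t
      = ∑ α, pdx α (fun y s => ∑ i, dPhi B i α (ξf y s).1 * vf y s i) x t) ∧
  (∀ i, pdt (fun y s => vf y s i) x t
      = ∑ α, pdx α (fun y s =>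
          ∑ B : Idx, dXi B ψ (ξf y s) (θf y s) * dPhi B i α (ξf y s).1) x t
        + ∑ α, pdx α (fun y s => Z y s i α) x t) ∧
  (pdt (fun y s => (1/2) * (∑ i, (vf y s i)^2) + eHat ψ (ξf y s) (θf y s)) x t
      = ∑ α, pdx α (fun y s => ∑ i,
          (∑ B : Idx, dXi B ψ (ξf y s) (θf y s) * dPhi B i α (ξf y s).1) * vf y s i) x t
        + ∑ α, pdx α (fun y s => ∑ i, Z y s i α * vf y s i) x t
        + ∑ α, pdx α (fun y s => Q y s α) x t + r x t) ∧
  (∀ i α β, pdx α (fun y s => (ξf y s).1 i β) x t = pdx β (fun y s => (ξf y s).1 i α) x t)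

/-- The entropy production identity for the augmented system. -/
def EntropyIdent (ψ : Xi → ℝ → ℝ) (ξf : Vec3 → ℝ → Xi) (vf : Vec3 → ℝ → Vec3)
    (θf : Vec3 → ℝ → ℝ) (Z : Vec3 → ℝ → Mat3) (Q : Vec3 → ℝ → Vec3)
    (r : Vec3 → ℝ → ℝ) (x : Vec3) (t : ℝ) : Prop :=
  pdt (fun y s => etaHat ψ (ξf y s) (θf y s)) x t
    - ∑ α, pdx α (fun y s => Q y s α / θf y s) x t
  = (∑ α, pdx α θf x t * Q x t α) / (θf x t)^2
    + (∑ α, ∑ i, pdx α (fun y s => vf y s i) x t * Z x t i α) / θf x t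
    + r x t / θf x t

/-- Newtonian viscous stress Z = μ ∇v. -/
def newtonianZ (μ : Mat3 → ℝ → ℝ) (ξf : Vec3 → ℝ → Xi) (vf : Vec3 → ℝ → Vec3)
    (θf : Vec3 → ℝ → ℝ) : Vec3 → ℝ → Mat3 :=
  fun x t i α => μ (ξf x t).1 (θf x t) * pdx α (fun y s => vf y s i) x t

/-- Fourier heat flux Q = k ∇θ. -/
def fourierQ (k : Mat3 → ℝ → ℝ) (ξf : Vec3 → ℝ → Xi)
    (θf : Vec3 → ℝ → ℝ) : Vec3 → ℝ → Vec3 :=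
  fun x t α => k (ξf x t).1 (θf x t) * pdx α θf x t

/-- The entropy identity for Newtonian viscosity and Fourier heat conduction (zero supply). -/
def EntropyIdentNF (ψ : Xi → ℝ → ℝ) (μ k : Mat3 → ℝ → ℝ) (ξf : Vec3 → ℝ → Xi)
    (vf : Vec3 → ℝ → Vec3) (θf : Vec3 → ℝ → ℝ) (x : Vec3) (t : ℝ) : Prop :=
  pdt (fun y s => etaHat ψ (ξf y s) (θf y s)) x t
    - ∑ α, pdx α (fun y s =>
        k (ξf y s).1 (θf y s) * pdx α θf y s / θf y s) x t
  = k (ξf x t).1 (θf x t) * (∑ α, (pdx α θf x t)^2) / (θf x t)^2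
    + μ (ξf x t).1 (θf x t) *
        (∑ α, ∑ i, (pdx α (fun y s => vf y s i) x t)^2) / θf x t

/-- Fundamental domain of the 3-torus. -/
def Box : Set Vec3 := Set.Icc 0 1

/-- Periodicity in the space variables with period 1. -/
def PeriodicX {E : Type*} (f : Vec3 → ℝ → E) : Prop :=
  ∀ (x : Vec3) (t : ℝ) (α : Fin 3), f (x + Pi.single α 1) t = f x t

/-- C^n regularity of a space-time field. -/
def FieldC {E : Type*} [NormedAddCommGroup E] [NormedSpace ℝ E]
    (n : ℕ) (f : Vec3 → ℝ → E) : Prop :=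
  ContDiff ℝ n (fun p : Vec3 × ℝ => f p.1 p.2)

/-- Spatial integral of the relative entropy at time t. -/
def relEntInt (ψ : Xi → ℝ → ℝ) (ξf : Vec3 → ℝ → Xi) (vf : Vec3 → ℝ → Vec3)
    (θf : Vec3 → ℝ → ℝ) (ξf' : Vec3 → ℝ → Xi) (vf' : Vec3 → ℝ → Vec3)
    (θf' : Vec3 → ℝ → ℝ) (t : ℝ) : ℝ :=
  ∫ x in Box, relEnt ψ (ξf x t) (vf x t) (θf x t) (ξf' x t) (vf' x t) (θf' x t)


/-- Spatial partial derivative of a static field. -/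
def pds (α : Fin 3) (f : Vec3 → ℝ) (x : Vec3) : ℝ :=
  deriv (fun s => f (Function.update x α s)) (x α)

/-- Deformation gradient ∇y of a static map y : ℝ³ → ℝ³. -/
def gradV (y : Vec3 → Vec3) (x : Vec3) : Mat3 :=
  fun i α => pds α (fun z => y z i) x

/-- ∂ψ/∂F_{iα} for ψ = ψ(F,θ). -/
def dFM (i α : Fin 3) (ψ : Mat3 → ℝ → ℝ) (F : Mat3) (θ : ℝ) : ℝ :=
  deriv (fun s => ψ (updMat F i α s) θ) (F i α)

/-- ∂ψ/∂θ for ψ = ψ(F,θ). -/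
def dThM (ψ : Mat3 → ℝ → ℝ) (F : Mat3) (θ : ℝ) : ℝ :=
  deriv (fun s => ψ F s) θ

/-- Index set for the full extended state U = (ξ, v, θ) ∈ ℝ²³. -/
abbrev UIdx := Idx ⊕ (Fin 3 ⊕ Unit)

def uComp (U : FullState) : UIdx → ℝ
  | .inl B => xiComp U.1 B
  | .inr (.inl i) => U.2.1 i
  | .inr (.inr _) => U.2.2

def uUpd (U : FullState) : UIdx → ℝ → FullState
  | .inl B, s => (xiUpd U.1 B s, U.2)
  | .inr (.inl i), s => (U.1, Function.update U.2.1 i s, U.2.2)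
  | .inr (.inr _), s => (U.1, U.2.1, s)

/-- Partial derivative in the state variables (ξ,v,θ). -/
def pdU (B : UIdx) (f : FullState → ℝ) (U : FullState) : ℝ :=
  deriv (fun s => f (uUpd U B s)) (uComp U B)

/-- Second partial derivative in the state variables (ξ,v,θ). -/
def pdU2 (A B : UIdx) (f : FullState → ℝ) (U : FullState) : ℝ :=
  pdU A (fun V => pdU B f V) U

/-- Test functions for the weak formulation on T³ × [0,T):
C¹, periodic in x, compactly supported in time in [0,T). -/
def TestFun (T : ℝ) (φ : Vec3 → ℝ → ℝ) : Prop :=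
  ContDiff ℝ 1 (fun p : Vec3 × ℝ => φ p.1 p.2) ∧ PeriodicX φ ∧
  ∃ T' : ℝ, T' < T ∧ ∀ (x : Vec3) (t : ℝ), T' ≤ t → φ x t = 0

/-- The elastic stress Σ_{iα} of the augmented constitutive theory. -/
def SigmaA (ψ : Xi → ℝ → ℝ) (ξ : Xi) (θ : ℝ) (i α : Fin 3) : ℝ :=
  ∑ B : Idx, dXi B ψ ξ θ * dPhi B i α ξ.1

/-! The relative quantities `ψ̂(ξ,θ|ξ̄,θ̄)`, `η̂(ξ,θ|ξ̄,θ̄)` and `∂ψ̂/∂ξ^B(ξ,θ|ξ̄,θ̄)` are the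
first-order Taylor remainders of `ψ̂`, `-∂_θ ψ̂` and `∂ψ̂/∂ξ^B`. Along curves `u`, `w` the remainder
`f(u|w)` has derivative `(Df(u) - Df(w))(u' - w') + (Df)(u|w) w'`, because `D²f(w)` is symmetric.
For `f = ψ̂` the last term gives the first two terms on the right of the identity, and the product
`(η̂(ξ,θ) - η̂(ξ̄,θ̄))(θ - θ̄)` in the relative entropy cancels the `θ`-part of the first term and
leaves `(θ - θ̄) ∂_t(η̂(ξ,θ) - η̂(ξ̄,θ̄))`.

The equations then remove the remaining time derivatives. The coefficients `∂Φ^B/∂F_{iα}(F)` are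
divergence free (Piola): `∂²Φ^B/∂F_{iα}∂F_{jβ}` is antisymmetric and `∂_α F_{jβ}` symmetric in
`α, β`. So in every elastic flux the derivative falls on the other factor only, and the elastic
terms combine to products in which `∂Φ^B/∂F_{iα}(F) - ∂Φ^B/∂F_{iα}(F̄)` appears. The viscous and
the heat terms come from the scalar identity
`(θ - θ̄)(ab/θ - āb̄/θ̄) - (a - ā)(b - b̄) = -θθ̄ (a/θ - ā/θ̄)(b/θ - b̄/θ̄)`.
-/

section LinearizationError

variable {E F : Type*} [NormedAddCommGroup E] [NormedSpace ℝ E]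
  [NormedAddCommGroup F] [NormedSpace ℝ F] {f : E → F}

/-- The first-order Taylor remainder of `f` at `w`. Every relative quantity `f(u|w)` of the
theory, scalar or vector valued, has this form. -/
def linearizationError (f : E → F) (u w : E) : F :=
  f u - f w - fderiv ℝ f w (u - w)

theorem linearizationError_fderiv_apply {k : E → F} {u w e : E}
    (hf : DifferentiableAt ℝ (fderiv ℝ f) w) (hu : k u = fderiv ℝ f u e)
    (hw : k =ᶠ[𝓝 w] fun q => fderiv ℝ f q e) :
    linearizationError k u w = linearizationError (fderiv ℝ f) u w e := by
  have hderiv : fderiv ℝ k w (u - w) = fderiv ℝ (fderiv ℝ f) w (u - w) e := by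
    rw [hw.fderiv_eq, fderiv_clm_apply hf (differentiableAt_const e)]
    simp
  simp only [linearizationError, hu, hw.eq_of_nhds, hderiv, sub_apply]

-- Symmetry of `D²f(w)` turns the term `D²f(w)(w')(u - w)` into `D²f(w)(u - w)(w')`.
theorem hasDerivAt_linearizationError {u w : ℝ → E} {u' w' : E} {s : ℝ}
    (hfu : DifferentiableAt ℝ f (u s)) (hfw : ContDiffAt ℝ 2 f (w s))
    (hu : HasDerivAt u u' s) (hw : HasDerivAt w w' s) :
    HasDerivAt (fun s => linearizationError f (u s) (w s))
      ((fderiv ℝ f (u s) - fderiv ℝ f (w s)) (u' - w')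
        + linearizationError (fderiv ℝ f) (u s) (w s) w') s := by
  have hf' : HasDerivAt (fun s => fderiv ℝ f (w s)) (fderiv ℝ (fderiv ℝ f) (w s) w') s :=
    ((hfw.fderiv_right (m := 1) (by norm_num)).differentiableAt
      one_ne_zero).hasFDerivAt.comp_hasDerivAt s hw
  have hsymm : fderiv ℝ (fderiv ℝ f) (w s) w' (u s - w s)
      = fderiv ℝ (fderiv ℝ f) (w s) (u s - w s) w' :=
    hfw.isSymmSndFDerivAt (by simp) _ _
  refine (((hfu.hasFDerivAt.comp_hasDerivAt s hu).sub
    ((hfw.differentiableAt two_ne_zero).hasFDerivAt.comp_hasDerivAt s hw)).sub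
      (hf'.clm_apply (hu.sub hw))).congr_deriv ?_
  simp only [linearizationError, sub_apply, Pi.sub_apply, hsymm, map_sub]
  abel

end LinearizationError

section ConstitutiveDerivatives

/-- The identification `ξ ↦ (ξ^B)_B` of the state space with `ℝ¹⁹`. -/
def xiCoord : Xi ≃L[ℝ] (Idx → ℝ) :=
  LinearEquiv.toContinuousLinearEquiv
    { toFun := xiComp
      map_add' := fun _ _ => by ext (_ | _ | _) <;> rfl
      map_smul' := fun _ _ => by ext (_ | _ | _) <;> rfl
      invFun := fun u => (fun i α => u (.inl (i, α)), fun i α => u (.inr (.inl (i, α))),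
        u (.inr (.inr ())))
      left_inv := fun _ => rfl
      right_inv := fun _ => by ext (_ | _ | _) <;> rfl }

theorem xiCoord_apply (ξ : Xi) (B : Idx) : xiCoord ξ B = xiComp ξ B := rfl

/-- The unit vector of the state space in the direction of the component `B`. -/
def xiBasis (B : Idx) : Xi := xiCoord.symm (Pi.single B 1)

theorem sum_xiComp_smul_xiBasis (ξ : Xi) : ∑ B, xiComp ξ B • xiBasis B = ξ :=
  calc ∑ B, xiComp ξ B • xiBasis B
      = xiCoord.symm (∑ B, xiCoord ξ B • Pi.single B 1) := by
        simp only [map_sum, map_smul, xiBasis, xiCoord_apply]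
    _ = ξ := by rw [← pi_eq_sum_univ', ContinuousLinearEquiv.symm_apply_apply]

theorem xiUpd_eq_symm_update (ξ : Xi) (B : Idx) (s : ℝ) :
    xiUpd ξ B s = xiCoord.symm (Function.update (xiCoord ξ) B s) := by
  rw [ContinuousLinearEquiv.eq_symm_apply]
  ext A
  rcases B with ⟨i, α⟩ | ⟨i, α⟩ | _ <;> rcases A with ⟨j, β⟩ | ⟨j, β⟩ | _ <;>
    simp only [xiCoord_apply, xiUpd, xiComp, updMat, Function.update_apply, apply_ite,
      ite_apply] <;>
    grind

theorem hasDerivAt_xiUpd (ξ : Xi) (B : Idx) (s : ℝ) :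
    HasDerivAt (xiUpd ξ B) (xiBasis B) s := by
  have hcomp := xiCoord.symm.hasFDerivAt.comp_hasDerivAt s (hasDerivAt_update (xiCoord ξ) B s)
  exact hcomp.congr_of_eventuallyEq (.of_forall fun r => xiUpd_eq_symm_update ξ B r)

theorem xiUpd_xiComp (ξ : Xi) (B : Idx) : xiUpd ξ B (xiComp ξ B) = ξ := by
  rw [xiUpd_eq_symm_update, ← xiCoord_apply, Function.update_eq_self,
    ContinuousLinearEquiv.symm_apply_apply]

variable {g ψ : Xi → ℝ → ℝ} {ξ ξ' : Xi} {θ θ' : ℝ}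

theorem dXi_eq_fderiv (hg : DifferentiableAt ℝ (Function.uncurry g) (ξ, θ)) (B : Idx) :
    dXi B g ξ θ = fderiv ℝ (Function.uncurry g) (ξ, θ) (xiBasis B, 0) :=
  (hg.hasFDerivAt.comp_hasDerivAt_of_eq (xiComp ξ B)
    ((hasDerivAt_xiUpd ξ B _).prodMk (hasDerivAt_const _ θ))
    (by rw [xiUpd_xiComp])).deriv

theorem dTh_eq_fderiv (hg : DifferentiableAt ℝ (Function.uncurry g) (ξ, θ)) :
    dTh g ξ θ = fderiv ℝ (Function.uncurry g) (ξ, θ) (0, 1) :=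
  (hg.hasFDerivAt.comp_hasDerivAt θ
    ((hasDerivAt_const θ ξ).prodMk (hasDerivAt_id θ))).deriv

theorem etaHat_eq_fderiv (hg : DifferentiableAt ℝ (Function.uncurry g) (ξ, θ)) :
    etaHat g ξ θ = fderiv ℝ (Function.uncurry g) (ξ, θ) (0, -1) := by
  rw [etaHat, dTh_eq_fderiv hg, ← map_neg, Prod.neg_mk, neg_zero]

theorem apply_eq_sum_xiBasis (L : Xi × ℝ →L[ℝ] ℝ) (δ : Xi) (τ : ℝ) :
    L (δ, τ) = (∑ B, L (xiBasis B, 0) * xiComp δ B) + L (0, 1) * τ := by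
  have hdecomp : (δ, τ)
      = (∑ B, xiComp δ B • ((xiBasis B, 0) : Xi × ℝ)) + τ • ((0, 1) : Xi × ℝ) := by
    ext1 <;> simp [-Fintype.sum_sum_type, Prod.fst_sum, Prod.snd_sum, sum_xiComp_smul_xiBasis]
  rw [hdecomp]
  simp only [map_add, map_sum, map_smul, smul_eq_mul, mul_comm]

theorem linearizationError_uncurry (hg : DifferentiableAt ℝ (Function.uncurry g) (ξ', θ')) :
    linearizationError (Function.uncurry g) (ξ, θ) (ξ', θ')
      = g ξ θ - g ξ' θ' - (∑ B, dXi B g ξ' θ' * (xiComp ξ B - xiComp ξ' B))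
        - dTh g ξ' θ' * (θ - θ') := by
  simp only [linearizationError, Function.uncurry_apply_pair, Prod.mk_sub_mk,
    apply_eq_sum_xiBasis _ (ξ - ξ'), ← xiCoord_apply, map_sub, Pi.sub_apply, dXi_eq_fderiv hg,
    dTh_eq_fderiv hg]
  ring

section ContDiffAt

variable {p : Xi × ℝ} (hψ : ContDiffAt ℝ 2 (Function.uncurry ψ) p)
include hψ

theorem differentiableAt_fderiv :
    DifferentiableAt ℝ (fderiv ℝ (Function.uncurry ψ)) p :=
  (hψ.fderiv_right (m := 1) (by norm_num)).differentiableAt one_ne_zero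

theorem eventually_differentiableAt_uncurry :
    ∀ᶠ q in 𝓝 p, DifferentiableAt ℝ (Function.uncurry ψ) q :=
  (hψ.eventually (by simp)).mono fun _ hq => hq.differentiableAt two_ne_zero

theorem dXi_eventuallyEq_fderiv (B : Idx) :
    Function.uncurry (dXi B ψ) =ᶠ[𝓝 p]
      fun q => fderiv ℝ (Function.uncurry ψ) q (xiBasis B, 0) :=
  (eventually_differentiableAt_uncurry hψ).mono fun _ hq => dXi_eq_fderiv hq B

theorem etaHat_eventuallyEq_fderiv :
    Function.uncurry (etaHat ψ) =ᶠ[𝓝 p] fun q => fderiv ℝ (Function.uncurry ψ) q (0, -1) :=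
  (eventually_differentiableAt_uncurry hψ).mono fun _ hq => etaHat_eq_fderiv hq

theorem differentiableAt_dXi (B : Idx) : DifferentiableAt ℝ (Function.uncurry (dXi B ψ)) p :=
  ((differentiableAt_fderiv hψ).clm_apply
    (differentiableAt_const _)).congr_of_eventuallyEq (dXi_eventuallyEq_fderiv hψ B)

theorem differentiableAt_etaHat : DifferentiableAt ℝ (Function.uncurry (etaHat ψ)) p :=
  ((differentiableAt_fderiv hψ).clm_apply
    (differentiableAt_const _)).congr_of_eventuallyEq (etaHat_eventuallyEq_fderiv hψ)

end ContDiffAt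

theorem psiRel_eq_linearizationError
    (hψ' : DifferentiableAt ℝ (Function.uncurry ψ) (ξ', θ')) :
    psiRel ψ ξ θ ξ' θ' = linearizationError (Function.uncurry ψ) (ξ, θ) (ξ', θ') := by
  rw [linearizationError_uncurry hψ', psiRel, etaHat]
  ring

section RelativeDerivatives

variable (hψ : DifferentiableAt ℝ (Function.uncurry ψ) (ξ, θ))
  (hψ' : ContDiffAt ℝ 2 (Function.uncurry ψ) (ξ', θ'))
include hψ hψ'

theorem dXiRel_eq_linearizationError_fderiv (B : Idx) :
    dXiRel B ψ ξ θ ξ' θ'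
      = linearizationError (fderiv ℝ (Function.uncurry ψ)) (ξ, θ) (ξ', θ') (xiBasis B, 0) :=
  (linearizationError_uncurry (differentiableAt_dXi hψ' B)).symm.trans <|
    linearizationError_fderiv_apply (differentiableAt_fderiv hψ') (dXi_eq_fderiv hψ B)
      (dXi_eventuallyEq_fderiv hψ' B)

theorem etaRel_eq_linearizationError_fderiv :
    etaRel ψ ξ θ ξ' θ'
      = linearizationError (fderiv ℝ (Function.uncurry ψ)) (ξ, θ) (ξ', θ') (0, -1) :=
  (linearizationError_uncurry (differentiableAt_etaHat hψ')).symm.trans <|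
    linearizationError_fderiv_apply (differentiableAt_fderiv hψ') (etaHat_eq_fderiv hψ)
      (etaHat_eventuallyEq_fderiv hψ')

end RelativeDerivatives

theorem hasDerivAt_psiRel {ξ ξ' : ℝ → Xi} {θ θ' : ℝ → ℝ} {ξₜ ξₜ' : Xi} {θₜ θₜ' s : ℝ}
    (hψ : DifferentiableAt ℝ (Function.uncurry ψ) (ξ s, θ s))
    (hψ' : ContDiffAt ℝ 2 (Function.uncurry ψ) (ξ' s, θ' s))
    (hξ : HasDerivAt ξ ξₜ s) (hθ : HasDerivAt θ θₜ s)
    (hξ' : HasDerivAt ξ' ξₜ' s) (hθ' : HasDerivAt θ' θₜ' s) :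
    HasDerivAt (fun s => psiRel ψ (ξ s) (θ s) (ξ' s) (θ' s))
      ((∑ B, (dXi B ψ (ξ s) (θ s) - dXi B ψ (ξ' s) (θ' s)) * (xiComp ξₜ B - xiComp ξₜ' B))
        - (etaHat ψ (ξ s) (θ s) - etaHat ψ (ξ' s) (θ' s)) * (θₜ - θₜ')
        + (∑ B, dXiRel B ψ (ξ s) (θ s) (ξ' s) (θ' s) * xiComp ξₜ' B)
        - etaRel ψ (ξ s) (θ s) (ξ' s) (θ' s) * θₜ') s := by
  have hu := hξ.prodMk hθ
  have hw := hξ'.prodMk hθ'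
  have hrel : (fun s => psiRel ψ (ξ s) (θ s) (ξ' s) (θ' s)) =ᶠ[𝓝 s]
      fun s => linearizationError (Function.uncurry ψ) (ξ s, θ s) (ξ' s, θ' s) :=
    (hw.continuousAt.eventually (eventually_differentiableAt_uncurry hψ')).mono
      fun _ => psiRel_eq_linearizationError
  refine ((hasDerivAt_linearizationError (u := fun s => (ξ s, θ s)) (w := fun s => (ξ' s, θ' s))
    hψ hψ' hu hw).congr_of_eventuallyEq hrel).congr_deriv ?_
  have hd' := hψ'.differentiableAt two_ne_zero
  have hneg : ∀ L : Xi × ℝ →L[ℝ] ℝ, L (0, 1) = -L (0, -1) := fun L => by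
    rw [← map_neg]; simp
  rw [Prod.mk_sub_mk, apply_eq_sum_xiBasis _ (ξₜ - ξₜ'), apply_eq_sum_xiBasis _ ξₜ', hneg, hneg,
    ← etaRel_eq_linearizationError_fderiv hψ hψ']
  simp only [sub_apply, ← dXi_eq_fderiv hψ, ← dXi_eq_fderiv hd', ← etaHat_eq_fderiv hψ,
    ← etaHat_eq_fderiv hd', ← dXiRel_eq_linearizationError_fderiv hψ hψ', ← xiCoord_apply,
    map_sub, Pi.sub_apply]
  ring

end ConstitutiveDerivatives

section NullLagrangians

theorem eps3_swap_left (i j k : Fin 3) : eps3 j i k = -eps3 i j k := by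
  fin_cases i <;> fin_cases j <;> fin_cases k <;> simp [eps3]

theorem eps3_swap_right (i j k : Fin 3) : eps3 i k j = -eps3 i j k := by
  fin_cases i <;> fin_cases j <;> fin_cases k <;> simp [eps3]

/-- The tensor `ε_{ijk} ε_{αβγ} = ∂³ det / ∂F_{iα} ∂F_{jβ} ∂F_{kγ}`, with the indices grouped in
pairs `(i, α)`, `(j, β)`, `(k, γ)`. -/
def epsPair (p q r : Fin 3 × Fin 3) : ℝ := eps3 p.1 q.1 r.1 * eps3 p.2 q.2 r.2

theorem epsPair_swap_left (p q r : Fin 3 × Fin 3) : epsPair q p r = epsPair p q r := by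
  rw [epsPair, eps3_swap_left, eps3_swap_left p.2, neg_mul_neg, epsPair]

theorem epsPair_swap_right (p q r : Fin 3 × Fin 3) : epsPair p r q = epsPair p q r := by
  rw [epsPair, eps3_swap_right, eps3_swap_right p.2, neg_mul_neg, epsPair]

theorem cof3_eq_sum_epsPair (F : Mat3) (p : Fin 3 × Fin 3) :
    cof3 F p.1 p.2 = 1 / 2 * ∑ q, ∑ r, epsPair p q r * F q.1 q.2 * F r.1 r.2 := by
  simp only [cof3, epsPair, Fintype.sum_prod_type]
  exact congrArg _ (Finset.sum_congr rfl fun _ _ => Finset.sum_comm)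

theorem det3_eq_sum_mul_cof3 (F : Mat3) :
    det3 F = 1 / 3 * ∑ p : Fin 3 × Fin 3, F p.1 p.2 * cof3 F p.1 p.2 := by
  simp only [det3, cof3, Fintype.sum_prod_type, Finset.mul_sum]
  refine Finset.sum_congr rfl fun i _ => ?_
  refine (Finset.sum_congr rfl fun j _ => Finset.sum_comm).trans (Finset.sum_comm.trans ?_)
  congr! 5
  ring

variable {F : ℝ → Mat3} {G : Mat3} {s : ℝ}

theorem hasDerivAt_entry (hF : HasDerivAt F G s) (p : Fin 3 × Fin 3) :
    HasDerivAt (fun s => F s p.1 p.2) (G p.1 p.2) s :=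
  hasDerivAt_pi.1 (hasDerivAt_pi.1 hF p.1) p.2

theorem hasDerivAt_cof3 (hF : HasDerivAt F G s) (p : Fin 3 × Fin 3) :
    HasDerivAt (fun s => cof3 (F s) p.1 p.2)
      (∑ q, (∑ r, epsPair p q r * F s r.1 r.2) * G q.1 q.2) s := by
  simp only [cof3_eq_sum_epsPair]
  refine ((HasDerivAt.fun_sum fun q _ => HasDerivAt.fun_sum fun r _ =>
    ((hasDerivAt_entry hF q).const_mul (epsPair p q r)).mul
      (hasDerivAt_entry hF r)).const_mul (1 / 2)).congr_deriv ?_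
  have hswap : ∑ q, ∑ r, epsPair p q r * F s q.1 q.2 * G r.1 r.2
      = ∑ q, ∑ r, epsPair p q r * G q.1 q.2 * F s r.1 r.2 := by
    rw [Finset.sum_comm]
    simp only [epsPair_swap_right p, mul_right_comm]
  simp only [Finset.sum_add_distrib]
  rw [hswap]
  simp only [Finset.sum_mul, mul_right_comm _ (F s _ _)]
  ring

theorem hasDerivAt_det3 (hF : HasDerivAt F G s) :
    HasDerivAt (fun s => det3 (F s))
      (∑ p : Fin 3 × Fin 3, cof3 (F s) p.1 p.2 * G p.1 p.2) s := by
  simp only [det3_eq_sum_mul_cof3]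
  refine ((HasDerivAt.fun_sum fun p _ =>
    (hasDerivAt_entry hF p).mul (hasDerivAt_cof3 hF p)).const_mul (1 / 3)).congr_deriv ?_
  have hswap : ∑ p, F s p.1 p.2 * ∑ q, (∑ r, epsPair p q r * F s r.1 r.2) * G q.1 q.2
      = 2 * ∑ p : Fin 3 × Fin 3, cof3 (F s) p.1 p.2 * G p.1 p.2 := by
    simp only [cof3_eq_sum_epsPair, Finset.mul_sum, Finset.sum_mul]
    rw [Finset.sum_comm]
    simp only [epsPair_swap_left]
    congr! 3
    ring
  rw [Finset.sum_add_distrib, hswap]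
  simp only [mul_comm (G _ _)]
  ring

/-- The polynomial form of `∂Φ^B/∂F_p`. -/
def gradPhi3 : Idx → Fin 3 × Fin 3 → Mat3 → ℝ
  | .inl b, p, _ => if b = p then 1 else 0
  | .inr (.inl b), p, F => ∑ r, epsPair b p r * F r.1 r.2
  | .inr (.inr _), p, F => cof3 F p.1 p.2

/-- The polynomial form of `∂²Φ^B/∂F_p∂F_q`. -/
def hessPhi3 : Idx → Fin 3 × Fin 3 → Fin 3 × Fin 3 → Mat3 → ℝ
  | .inl _, _, _, _ => 0
  | .inr (.inl b), p, q, _ => epsPair b p q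
  | .inr (.inr _), p, q, F => ∑ r, epsPair p q r * F r.1 r.2

theorem hasDerivAt_xiComp_Phi3 (hF : HasDerivAt F G s) (B : Idx) :
    HasDerivAt (fun s => xiComp (Phi3 (F s)) B)
      (∑ p, gradPhi3 B p (F s) * G p.1 p.2) s :=
  match B with
  | .inl b => by simpa [gradPhi3, xiComp, Phi3] using hasDerivAt_entry hF b
  | .inr (.inl b) => hasDerivAt_cof3 hF b
  | .inr (.inr _) => hasDerivAt_det3 hF

theorem hasDerivAt_gradPhi3 (hF : HasDerivAt F G s) (B : Idx) (p : Fin 3 × Fin 3) :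
    HasDerivAt (fun s => gradPhi3 B p (F s)) (∑ q, hessPhi3 B p q (F s) * G q.1 q.2) s :=
  match B with
  | .inl _ => by simpa [gradPhi3, hessPhi3] using hasDerivAt_const s _
  | .inr (.inl _) => HasDerivAt.fun_sum fun q _ => (hasDerivAt_entry hF q).const_mul _
  | .inr (.inr _) => hasDerivAt_cof3 hF p

theorem hasDerivAt_updMat (F : Mat3) (i α : Fin 3) (s : ℝ) :
    HasDerivAt (updMat F i α) (Pi.single i (Pi.single α 1)) s := by
  refine hasDerivAt_pi.2 fun j => ?_
  obtain rfl | hj := eq_or_ne j i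
  · simpa [updMat] using hasDerivAt_update (F j) α s
  · simpa [updMat, hj] using hasDerivAt_const s (F j)

theorem dPhi_eq_gradPhi3 (B : Idx) (i α : Fin 3) (F : Mat3) :
    dPhi B i α F = gradPhi3 B (i, α) F := by
  refine (hasDerivAt_xiComp_Phi3 (hasDerivAt_updMat F i α (F i α)) B).deriv.trans ?_
  have hupd : updMat F i α (F i α) = F := by simp [updMat]
  rw [hupd, Fintype.sum_eq_single (i, α)]
  · simp
  · rintro ⟨j, β⟩ hne
    obtain rfl | hj := eq_or_ne j i
    · have hβ : β ≠ α := fun h => hne (by rw [h])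
      simp [hβ]
    · simp [hj]

theorem hasDerivAt_dPhi (hF : HasDerivAt F G s) (B : Idx) (i α : Fin 3) :
    HasDerivAt (fun s => dPhi B i α (F s)) (∑ q, hessPhi3 B (i, α) q (F s) * G q.1 q.2) s := by
  simpa only [dPhi_eq_gradPhi3] using hasDerivAt_gradPhi3 hF B (i, α)

theorem hessPhi3_swap_snd (B : Idx) (i j α β : Fin 3) (F : Mat3) :
    hessPhi3 B (i, α) (j, β) F = -hessPhi3 B (i, β) (j, α) F :=
  match B with
  | .inl _ => neg_zero.symm
  | .inr (.inl _) => by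
    simp only [hessPhi3, epsPair, eps3_swap_right _ α β, mul_neg, neg_neg]
  | .inr (.inr _) => by
    simp only [hessPhi3, epsPair, eps3_swap_left α β, mul_neg, neg_mul, Finset.sum_neg_distrib,
      neg_neg]

theorem sum_mul_eq_zero_of_antisymm_of_symm {ι : Type*} [Fintype ι] {A S : ι → ι → ℝ}
    (hA : ∀ a b, A a b = -A b a) (hS : ∀ a b, S a b = S b a) :
    ∑ a, ∑ b, A a b * S a b = 0 := by
  refine self_eq_neg.1 ?_
  calc ∑ a, ∑ b, A a b * S a b = ∑ b, ∑ a, A a b * S a b := Finset.sum_comm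
    _ = -∑ b, ∑ a, A b a * S b a := by
      simp only [← Finset.sum_neg_distrib, ← neg_mul, ← hA, hS]

theorem sum_hessPhi3_mul_eq_zero (B : Idx) (i : Fin 3) (F : Mat3) {G : Fin 3 → Mat3}
    (hG : ∀ j α β, G α j β = G β j α) :
    ∑ α, ∑ q, hessPhi3 B (i, α) q F * G α q.1 q.2 = 0 := by
  simp only [Fintype.sum_prod_type]
  rw [Finset.sum_comm]
  exact Finset.sum_eq_zero fun j _ => sum_mul_eq_zero_of_antisymm_of_symm
    (fun α β => hessPhi3_swap_snd B i j α β F) (hG j)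

end NullLagrangians

section FieldCalculus

variable {E : Type*} [NormedAddCommGroup E] [NormedSpace ℝ E] {x : Vec3} {t : ℝ}

theorem differentiableAt_slice_space {f : Vec3 → ℝ → E}
    (hf : DifferentiableAt ℝ (Function.uncurry f) (x, t)) (α : Fin 3) :
    DifferentiableAt ℝ (fun s => f (Function.update x α s) t) (x α) :=
  (hf.hasFDerivAt.comp_hasDerivAt_of_eq (x α)
    ((hasDerivAt_update x α _).prodMk (hasDerivAt_const _ t)) (by simp)).differentiableAt

theorem differentiableAt_slice_time {f : Vec3 → ℝ → E}
    (hf : DifferentiableAt ℝ (Function.uncurry f) (x, t)) :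
    DifferentiableAt ℝ (fun s => f x s) t :=
  (hf.hasFDerivAt.comp_hasDerivAt t
    ((hasDerivAt_const t x).prodMk (hasDerivAt_id t))).differentiableAt

theorem hasDerivAt_pdx {f : Vec3 → ℝ → ℝ}
    (hf : DifferentiableAt ℝ (Function.uncurry f) (x, t)) (α : Fin 3) :
    HasDerivAt (fun s => f (Function.update x α s) t) (pdx α f x t) (x α) :=
  (differentiableAt_slice_space hf α).hasDerivAt

theorem hasDerivAt_pdt {f : Vec3 → ℝ → ℝ}
    (hf : DifferentiableAt ℝ (Function.uncurry f) (x, t)) :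
    HasDerivAt (fun s => f x s) (pdt f x t) t :=
  (differentiableAt_slice_time hf).hasDerivAt

section Rules

variable {f g : Vec3 → ℝ → ℝ} (hf : DifferentiableAt ℝ (Function.uncurry f) (x, t))
  (hg : DifferentiableAt ℝ (Function.uncurry g) (x, t)) (α : Fin 3)
include hf hg

theorem pdx_add : pdx α (fun y s => f y s + g y s) x t = pdx α f x t + pdx α g x t :=
  ((hasDerivAt_pdx hf α).add (hasDerivAt_pdx hg α)).deriv

theorem pdx_sub : pdx α (fun y s => f y s - g y s) x t = pdx α f x t - pdx α g x t :=
  ((hasDerivAt_pdx hf α).sub (hasDerivAt_pdx hg α)).deriv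

theorem pdx_mul :
    pdx α (fun y s => f y s * g y s) x t = pdx α f x t * g x t + f x t * pdx α g x t := by
  refine ((hasDerivAt_pdx hf α).mul (hasDerivAt_pdx hg α)).deriv.trans ?_
  rw [Function.update_eq_self]

end Rules

theorem pdx_sum {ι : Type*} [Fintype ι] {f : ι → Vec3 → ℝ → ℝ}
    (hf : ∀ k, DifferentiableAt ℝ (Function.uncurry (f k)) (x, t)) (α : Fin 3) :
    pdx α (fun y s => ∑ k, f k y s) x t = ∑ k, pdx α (f k) x t :=
  (HasDerivAt.fun_sum fun k _ => hasDerivAt_pdx (hf k) α).deriv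

theorem sum_pdx_sum_mul_of_divergence_free {ι : Type*} [Fintype ι] {f : ι → Vec3 → ℝ → ℝ}
    {G : ι → Fin 3 → Vec3 → ℝ → ℝ}
    (hf : ∀ k, DifferentiableAt ℝ (Function.uncurry (f k)) (x, t))
    (hG : ∀ k α, DifferentiableAt ℝ (Function.uncurry (G k α)) (x, t))
    (hdiv : ∀ k, ∑ α, pdx α (G k α) x t = 0) :
    ∑ α, pdx α (fun y s => ∑ k, f k y s * G k α y s) x t
      = ∑ α, ∑ k, pdx α (f k) x t * G k α x t := by
  have hvanish : ∑ α, ∑ k, f k x t * pdx α (G k α) x t = 0 := by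
    rw [Finset.sum_comm]
    simp only [← Finset.mul_sum, hdiv, mul_zero, Finset.sum_const_zero]
  calc ∑ α, pdx α (fun y s => ∑ k, f k y s * G k α y s) x t
      = ∑ α, ∑ k, (pdx α (f k) x t * G k α x t + f k x t * pdx α (G k α) x t) :=
        Finset.sum_congr rfl fun α _ =>
          (pdx_sum (f := fun k y s => f k y s * G k α y s)
            (fun k => (hf k).mul (hG k α)) α).trans <|
            Finset.sum_congr rfl fun k _ => pdx_mul (hf k) (hG k α) α
    _ = ∑ α, ∑ k, pdx α (f k) x t * G k α x t := by
        simp only [Finset.sum_add_distrib, hvanish, add_zero]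

theorem sum_pdx_sum_mul {ι : Type*} [Fintype ι] {T : ι → Fin 3 → Vec3 → ℝ → ℝ}
    {w : ι → Vec3 → ℝ → ℝ}
    (hT : ∀ i α, DifferentiableAt ℝ (Function.uncurry (T i α)) (x, t))
    (hw : ∀ i, DifferentiableAt ℝ (Function.uncurry (w i)) (x, t)) :
    ∑ α, pdx α (fun y s => ∑ i, T i α y s * w i y s) x t
      = ∑ i, (∑ α, pdx α (T i α) x t) * w i x t + ∑ α, ∑ i, T i α x t * pdx α (w i) x t := by
  simp only [Finset.sum_mul]
  rw [Finset.sum_comm, ← Finset.sum_add_distrib]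
  refine Finset.sum_congr rfl fun α _ => ?_
  rw [← Finset.sum_add_distrib]
  exact (pdx_sum (f := fun i y s => T i α y s * w i y s) (fun i => (hT i α).mul (hw i)) α).trans <|
    Finset.sum_congr rfl fun i _ => pdx_mul (hT i α) (hw i) α

variable {ξf : Vec3 → ℝ → Xi}

theorem differentiableAt_comp_state {g : Xi → ℝ → ℝ} {θf : Vec3 → ℝ → ℝ}
    (hg : DifferentiableAt ℝ (Function.uncurry g) (ξf x t, θf x t))
    (hξ : DifferentiableAt ℝ (Function.uncurry ξf) (x, t))
    (hθ : DifferentiableAt ℝ (Function.uncurry θf) (x, t)) :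
    DifferentiableAt ℝ (Function.uncurry fun y s => g (ξf y s) (θf y s)) (x, t) :=
  DifferentiableAt.comp (g := Function.uncurry g)
    (f := fun q => (Function.uncurry ξf q, Function.uncurry θf q)) (x, t) hg (hξ.prodMk hθ)

theorem differentiableAt_xiComp (hξ : DifferentiableAt ℝ (Function.uncurry ξf) (x, t))
    (B : Idx) : DifferentiableAt ℝ (Function.uncurry fun y s => xiComp (ξf y s) B) (x, t) :=
  differentiableAt_pi.1 (xiCoord.differentiableAt.comp (x, t) hξ) B

theorem pdt_xiComp (hξ : DifferentiableAt ℝ (Function.uncurry ξf) (x, t)) (B : Idx) :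
    pdt (fun y s => xiComp (ξf y s) B) x t = xiComp (deriv (fun s => ξf x s) t) B :=
  (hasDerivAt_pi.1 (xiCoord.hasFDerivAt.comp_hasDerivAt t
    (differentiableAt_slice_time hξ).hasDerivAt) B).deriv

theorem differentiable_dPhi (B : Idx) (i α : Fin 3) : Differentiable ℝ (dPhi B i α) := by
  rw [funext (dPhi_eq_gradPhi3 B i α)]
  change Differentiable ℝ fun F => gradPhi3 B (i, α) F
  rcases B with _ | _ | _ <;> simp only [gradPhi3, cof3] <;> fun_prop

theorem differentiableAt_dPhi (hξ : DifferentiableAt ℝ (Function.uncurry ξf) (x, t)) (B : Idx)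
    (i α : Fin 3) :
    DifferentiableAt ℝ (Function.uncurry fun y s => dPhi B i α (ξf y s).1) (x, t) :=
  (differentiable_dPhi B i α _).comp (x, t) hξ.fst

theorem piola_identity (hξ : DifferentiableAt ℝ (Function.uncurry ξf) (x, t))
    (hcurl : ∀ i α β,
      pdx α (fun y s => (ξf y s).1 i β) x t = pdx β (fun y s => (ξf y s).1 i α) x t)
    (B : Idx) (i : Fin 3) :
    ∑ α, pdx α (fun y s => dPhi B i α (ξf y s).1) x t = 0 := by
  have hF : ∀ α, HasDerivAt (fun s => (ξf (Function.update x α s) t).1)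
      (fun j β => pdx α (fun y s => (ξf y s).1 j β) x t) (x α) := fun α =>
    hasDerivAt_pi.2 fun j => hasDerivAt_pi.2 fun β =>
      hasDerivAt_pdx (differentiableAt_xiComp hξ (.inl (j, β))) α
  rw [← sum_hessPhi3_mul_eq_zero B i (ξf x t).1 hcurl]
  refine Finset.sum_congr rfl fun α _ => ?_
  refine (hasDerivAt_dPhi (hF α) B i α).deriv.trans ?_
  rw [Function.update_eq_self]

end FieldCalculus

/-- `(ξ, v, θ)` solves the augmented thermoviscoelasticity system with fields `(Z, Q, r)` at the
point `(x, t)`, with the regularity needed to differentiate every term there. The entropy identity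
replaces the balance of energy. -/
structure AugmentedSolutionAt (ψ : Xi → ℝ → ℝ) (ξ : Vec3 → ℝ → Xi) (v : Vec3 → ℝ → Vec3)
    (θ : Vec3 → ℝ → ℝ) (Z : Vec3 → ℝ → Mat3) (Q : Vec3 → ℝ → Vec3) (r : Vec3 → ℝ → ℝ)
    (x : Vec3) (t : ℝ) : Prop where
  contDiffAt_freeEnergy : ContDiffAt ℝ 2 (Function.uncurry ψ) (ξ x t, θ x t)
  differentiableAt_strain : DifferentiableAt ℝ (Function.uncurry ξ) (x, t)
  differentiableAt_velocity : DifferentiableAt ℝ (Function.uncurry v) (x, t)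
  differentiableAt_temperature : DifferentiableAt ℝ (Function.uncurry θ) (x, t)
  differentiableAt_viscousStress : DifferentiableAt ℝ (Function.uncurry Z) (x, t)
  differentiableAt_heatFlux : DifferentiableAt ℝ (Function.uncurry Q) (x, t)
  temperature_ne_zero : θ x t ≠ 0
  kinematics : ∀ B, pdt (fun y s => xiComp (ξ y s) B) x t
    = ∑ α, pdx α (fun y s => ∑ i, dPhi B i α (ξ y s).1 * v y s i) x t
  momentum : ∀ i, pdt (fun y s => v y s i) x t
    = ∑ α, pdx α (fun y s => SigmaA ψ (ξ y s) (θ y s) i α) x t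
      + ∑ α, pdx α (fun y s => Z y s i α) x t
  curl_free : ∀ i α β,
    pdx α (fun y s => (ξ y s).1 i β) x t = pdx β (fun y s => (ξ y s).1 i α) x t
  entropy : EntropyIdent ψ ξ v θ Z Q r x t

namespace AugmentedSolutionAt

variable {ψ : Xi → ℝ → ℝ} {ξ ξ' : Vec3 → ℝ → Xi} {v v' : Vec3 → ℝ → Vec3}
  {θ θ' : Vec3 → ℝ → ℝ} {Z Z' : Vec3 → ℝ → Mat3} {Q Q' : Vec3 → ℝ → Vec3}
  {r r' : Vec3 → ℝ → ℝ} {x : Vec3} {t : ℝ}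

theorem of_augSys (hψ : PsiC3 ψ) (hξ : FieldC 2 ξ) (hv : FieldC 2 v) (hθ : FieldC 2 θ)
    (hZ : FieldC 1 Z) (hQ : FieldC 1 Q) (hpos : 0 < θ x t)
    (hsys : AugSys ψ ξ v θ Z Q r x t) (hent : EntropyIdent ψ ξ v θ Z Q r x t) :
    AugmentedSolutionAt ψ ξ v θ Z Q r x t where
  contDiffAt_freeEnergy :=
    have hmem : univ ×ˢ Ioi (0 : ℝ) ∈ 𝓝 (ξ x t, θ x t) :=
      (isOpen_univ.prod isOpen_Ioi).mem_nhds ⟨mem_univ _, hpos⟩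
    (hψ.contDiffAt hmem).of_le (by norm_num)
  differentiableAt_strain := hξ.contDiffAt.differentiableAt two_ne_zero
  differentiableAt_velocity := hv.contDiffAt.differentiableAt two_ne_zero
  differentiableAt_temperature := hθ.contDiffAt.differentiableAt two_ne_zero
  differentiableAt_viscousStress := hZ.contDiffAt.differentiableAt one_ne_zero
  differentiableAt_heatFlux := hQ.contDiffAt.differentiableAt one_ne_zero
  temperature_ne_zero := hpos.ne'
  kinematics := hsys.1
  momentum := hsys.2.1
  curl_free := hsys.2.2.2
  entropy := hent

section OneSolution

variable (h : AugmentedSolutionAt ψ ξ v θ Z Q r x t)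
include h

theorem differentiableAt_freeEnergy : DifferentiableAt ℝ (Function.uncurry ψ) (ξ x t, θ x t) :=
  h.contDiffAt_freeEnergy.differentiableAt two_ne_zero

theorem differentiableAt_velocity_apply (i : Fin 3) :
    DifferentiableAt ℝ (Function.uncurry fun y s => v y s i) (x, t) :=
  differentiableAt_pi.1 h.differentiableAt_velocity i

theorem differentiableAt_viscousStress_apply (i α : Fin 3) :
    DifferentiableAt ℝ (Function.uncurry fun y s => Z y s i α) (x, t) :=
  differentiableAt_pi.1 (differentiableAt_pi.1 h.differentiableAt_viscousStress i) α

theorem differentiableAt_heatFlux_div_temperature (α : Fin 3) :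
    DifferentiableAt ℝ (Function.uncurry fun y s => Q y s α / θ y s) (x, t) := by
  simp only [div_eq_mul_inv]
  exact (differentiableAt_pi.1 h.differentiableAt_heatFlux α).mul
    (h.differentiableAt_temperature.inv h.temperature_ne_zero)

theorem differentiableAt_dXi_comp (B : Idx) :
    DifferentiableAt ℝ (Function.uncurry fun y s => dXi B ψ (ξ y s) (θ y s)) (x, t) :=
  differentiableAt_comp_state (differentiableAt_dXi h.contDiffAt_freeEnergy B)
    h.differentiableAt_strain h.differentiableAt_temperature

theorem differentiableAt_etaHat_comp :
    DifferentiableAt ℝ (Function.uncurry fun y s => etaHat ψ (ξ y s) (θ y s)) (x, t) :=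
  differentiableAt_comp_state (differentiableAt_etaHat h.contDiffAt_freeEnergy)
    h.differentiableAt_strain h.differentiableAt_temperature

theorem sum_pdx_dPhi (B : Idx) (i : Fin 3) :
    ∑ α, pdx α (fun y s => dPhi B i α (ξ y s).1) x t = 0 :=
  piola_identity h.differentiableAt_strain h.curl_free B i

theorem pdt_strain (B : Idx) :
    pdt (fun y s => xiComp (ξ y s) B) x t
      = ∑ α, ∑ i, dPhi B i α (ξ x t).1 * pdx α (fun y s => v y s i) x t := by
  rw [h.kinematics]
  simp only [mul_comm (dPhi _ _ _ _)]
  exact sum_pdx_sum_mul_of_divergence_free h.differentiableAt_velocity_apply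
    (fun i α => differentiableAt_dPhi h.differentiableAt_strain B i α) (h.sum_pdx_dPhi B)

theorem sum_pdx_SigmaA (i : Fin 3) :
    ∑ α, pdx α (fun y s => SigmaA ψ (ξ y s) (θ y s) i α) x t
      = ∑ α, ∑ B, pdx α (fun y s => dXi B ψ (ξ y s) (θ y s)) x t * dPhi B i α (ξ x t).1 :=
  sum_pdx_sum_mul_of_divergence_free h.differentiableAt_dXi_comp
    (fun B α => differentiableAt_dPhi h.differentiableAt_strain B i α)
    (fun B => h.sum_pdx_dPhi B i)

end OneSolution

section TwoSolutions

variable (h : AugmentedSolutionAt ψ ξ v θ Z Q r x t)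
  (h' : AugmentedSolutionAt ψ ξ' v' θ' Z' Q' r' x t)
include h h'

theorem differentiableAt_velocity_sub_apply (i : Fin 3) :
    DifferentiableAt ℝ (Function.uncurry fun y s => v y s i - v' y s i) (x, t) :=
  (h.differentiableAt_velocity_apply i).sub (h'.differentiableAt_velocity_apply i)

theorem differentiableAt_relativeElasticStress (i α : Fin 3) :
    DifferentiableAt ℝ (Function.uncurry fun y s => ∑ B,
      (dXi B ψ (ξ y s) (θ y s) - dXi B ψ (ξ' y s) (θ' y s)) * dPhi B i α (ξ y s).1) (x, t) :=
  DifferentiableAt.fun_sum fun B _ => ((h.differentiableAt_dXi_comp B).sub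
    (h'.differentiableAt_dXi_comp B)).mul (differentiableAt_dPhi h.differentiableAt_strain B i α)

theorem differentiableAt_relativeViscousStress (i α : Fin 3) :
    DifferentiableAt ℝ (Function.uncurry fun y s => Z y s i α - Z' y s i α) (x, t) :=
  (h.differentiableAt_viscousStress_apply i α).sub (h'.differentiableAt_viscousStress_apply i α)

theorem pdt_relEnt :
    pdt (fun y s => relEnt ψ (ξ y s) (v y s) (θ y s) (ξ' y s) (v' y s) (θ' y s)) x t
      = -(pdt θ' x t) * etaRel ψ (ξ x t) (θ x t) (ξ' x t) (θ' x t)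
        + (∑ B, pdt (fun y s => xiComp (ξ' y s) B) x t
            * dXiRel B ψ (ξ x t) (θ x t) (ξ' x t) (θ' x t))
        + (∑ B, (dXi B ψ (ξ x t) (θ x t) - dXi B ψ (ξ' x t) (θ' x t))
            * (pdt (fun y s => xiComp (ξ y s) B) x t - pdt (fun y s => xiComp (ξ' y s) B) x t))
        + (∑ i, (v x t i - v' x t i)
            * (pdt (fun y s => v y s i) x t - pdt (fun y s => v' y s i) x t))
        + (θ x t - θ' x t) * (pdt (fun y s => etaHat ψ (ξ y s) (θ y s)) x t
            - pdt (fun y s => etaHat ψ (ξ' y s) (θ' y s)) x t) := by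
  have hθ := hasDerivAt_pdt h.differentiableAt_temperature
  have hθ' := hasDerivAt_pdt h'.differentiableAt_temperature
  have hpsi := hasDerivAt_psiRel h.differentiableAt_freeEnergy h'.contDiffAt_freeEnergy
    (differentiableAt_slice_time h.differentiableAt_strain).hasDerivAt hθ
    (differentiableAt_slice_time h'.differentiableAt_strain).hasDerivAt hθ'
  have hkinetic : HasDerivAt (fun s => 1 / 2 * ∑ i, (v x s i - v' x s i) ^ 2)
      (∑ i, (v x t i - v' x t i)
        * (pdt (fun y s => v y s i) x t - pdt (fun y s => v' y s i) x t)) t := by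
    refine ((HasDerivAt.fun_sum fun i _ =>
      ((hasDerivAt_pdt (h.differentiableAt_velocity_apply i)).fun_sub
        (hasDerivAt_pdt (h'.differentiableAt_velocity_apply i))).fun_pow 2).const_mul
          (1 / 2)).congr_deriv ?_
    rw [Finset.mul_sum]
    congr! 1
    ring
  have heta := ((hasDerivAt_pdt h.differentiableAt_etaHat_comp).fun_sub
    (hasDerivAt_pdt h'.differentiableAt_etaHat_comp)).fun_mul (hθ.fun_sub hθ')
  refine ((hpsi.add hkinetic).add heta).deriv.trans ?_
  simp only [pdt_xiComp h.differentiableAt_strain, pdt_xiComp h'.differentiableAt_strain,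
    mul_comm (dXiRel _ _ _ _ _ _)]
  ring

theorem elastic_power_balance :
    (∑ B, (dXi B ψ (ξ x t) (θ x t) - dXi B ψ (ξ' x t) (θ' x t))
        * (pdt (fun y s => xiComp (ξ y s) B) x t - pdt (fun y s => xiComp (ξ' y s) B) x t))
      - ∑ α, ∑ i, (∑ B, (dXi B ψ (ξ x t) (θ x t) - dXi B ψ (ξ' x t) (θ' x t))
          * dPhi B i α (ξ x t).1) * pdx α (fun y s => v y s i - v' y s i) x t
      = ∑ α, ∑ i, pdx α (fun y s => v' y s i) x t
          * ∑ B, (dXi B ψ (ξ x t) (θ x t) - dXi B ψ (ξ' x t) (θ' x t))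
            * (dPhi B i α (ξ x t).1 - dPhi B i α (ξ' x t).1) := by
  simp only [h.pdt_strain, h'.pdt_strain, Finset.mul_sum, Finset.sum_mul,
    pdx_sub (h.differentiableAt_velocity_apply _) (h'.differentiableAt_velocity_apply _),
    ← Finset.sum_sub_distrib]
  rw [Finset.sum_comm, ← Finset.sum_sub_distrib]
  refine Finset.sum_congr rfl fun α _ => ?_
  rw [Finset.sum_comm, ← Finset.sum_sub_distrib]
  refine Finset.sum_congr rfl fun i _ => ?_
  rw [← Finset.sum_sub_distrib]
  exact Finset.sum_congr rfl fun B _ => by ring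

theorem elastic_momentum_balance :
    (∑ i, (v x t i - v' x t i) * (∑ α, pdx α (fun y s => SigmaA ψ (ξ y s) (θ y s) i α) x t
          - ∑ α, pdx α (fun y s => SigmaA ψ (ξ' y s) (θ' y s) i α) x t))
      - ∑ i, (∑ α, pdx α (fun y s => ∑ B, (dXi B ψ (ξ y s) (θ y s)
          - dXi B ψ (ξ' y s) (θ' y s)) * dPhi B i α (ξ y s).1) x t) * (v x t i - v' x t i)
      = ∑ α, ∑ i, ∑ B, pdx α (fun y s => dXi B ψ (ξ' y s) (θ' y s)) x t
          * (dPhi B i α (ξ x t).1 - dPhi B i α (ξ' x t).1) * (v x t i - v' x t i) := by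
  have hdiv : ∀ i, ∑ α, pdx α (fun y s => ∑ B, (dXi B ψ (ξ y s) (θ y s)
      - dXi B ψ (ξ' y s) (θ' y s)) * dPhi B i α (ξ y s).1) x t
      = ∑ α, ∑ B, (pdx α (fun y s => dXi B ψ (ξ y s) (θ y s)) x t
        - pdx α (fun y s => dXi B ψ (ξ' y s) (θ' y s)) x t) * dPhi B i α (ξ x t).1 := fun i => by
    simp only [← pdx_sub (h.differentiableAt_dXi_comp _) (h'.differentiableAt_dXi_comp _)]
    exact sum_pdx_sum_mul_of_divergence_free
      (fun B => (h.differentiableAt_dXi_comp B).sub (h'.differentiableAt_dXi_comp B))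
      (fun B α => differentiableAt_dPhi h.differentiableAt_strain B i α)
      (fun B => h.sum_pdx_dPhi B i)
  simp only [hdiv, h.sum_pdx_SigmaA, h'.sum_pdx_SigmaA, ← Finset.sum_sub_distrib,
    Finset.mul_sum, Finset.sum_mul]
  rw [Finset.sum_comm]
  exact Finset.sum_congr rfl fun α _ => Finset.sum_congr rfl fun i _ =>
    Finset.sum_congr rfl fun B _ => by ring

theorem elastic_balance :
    (∑ B, (dXi B ψ (ξ x t) (θ x t) - dXi B ψ (ξ' x t) (θ' x t))
        * (pdt (fun y s => xiComp (ξ y s) B) x t - pdt (fun y s => xiComp (ξ' y s) B) x t))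
      + (∑ i, (v x t i - v' x t i)
        * (∑ α, pdx α (fun y s => SigmaA ψ (ξ y s) (θ y s) i α) x t
          - ∑ α, pdx α (fun y s => SigmaA ψ (ξ' y s) (θ' y s) i α) x t))
      - ∑ α, pdx α (fun y s => ∑ i, (∑ B, (dXi B ψ (ξ y s) (θ y s)
          - dXi B ψ (ξ' y s) (θ' y s)) * dPhi B i α (ξ y s).1) * (v y s i - v' y s i)) x t
      = (∑ α, ∑ i, ∑ B, pdx α (fun y s => dXi B ψ (ξ' y s) (θ' y s)) x t
          * (dPhi B i α (ξ x t).1 - dPhi B i α (ξ' x t).1) * (v x t i - v' x t i))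
        + ∑ α, ∑ i, pdx α (fun y s => v' y s i) x t
          * ∑ B, (dXi B ψ (ξ x t) (θ x t) - dXi B ψ (ξ' x t) (θ' x t))
            * (dPhi B i α (ξ x t).1 - dPhi B i α (ξ' x t).1) := by
  rw [sum_pdx_sum_mul (h.differentiableAt_relativeElasticStress h')
    (h.differentiableAt_velocity_sub_apply h')]
  linear_combination h.elastic_power_balance h' + h.elastic_momentum_balance h'

theorem viscous_balance :
    (∑ i, (v x t i - v' x t i) * (∑ α, pdx α (fun y s => Z y s i α) x t
          - ∑ α, pdx α (fun y s => Z' y s i α) x t))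
      + (θ x t - θ' x t)
        * ((∑ α, ∑ i, pdx α (fun y s => v y s i) x t * Z x t i α) / θ x t
          - (∑ α, ∑ i, pdx α (fun y s => v' y s i) x t * Z' x t i α) / θ' x t)
      - ∑ α, pdx α (fun y s => ∑ i, (Z y s i α - Z' y s i α) * (v y s i - v' y s i)) x t
      = -(θ x t * θ' x t * ∑ α, ∑ i, (pdx α (fun y s => v y s i) x t / θ x t
            - pdx α (fun y s => v' y s i) x t / θ' x t)
          * (Z x t i α / θ x t - Z' x t i α / θ' x t)) := by
  have hdissipation : (θ x t - θ' x t)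
        * ((∑ α, ∑ i, pdx α (fun y s => v y s i) x t * Z x t i α) / θ x t
          - (∑ α, ∑ i, pdx α (fun y s => v' y s i) x t * Z' x t i α) / θ' x t)
      - ∑ α, ∑ i, (Z x t i α - Z' x t i α)
          * (pdx α (fun y s => v y s i) x t - pdx α (fun y s => v' y s i) x t)
      = -(θ x t * θ' x t * ∑ α, ∑ i, (pdx α (fun y s => v y s i) x t / θ x t
            - pdx α (fun y s => v' y s i) x t / θ' x t)
          * (Z x t i α / θ x t - Z' x t i α / θ' x t)) := by
    simp only [Finset.sum_div, ← Finset.sum_sub_distrib, Finset.mul_sum, ← Finset.sum_neg_distrib]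
    refine Finset.sum_congr rfl fun α _ => Finset.sum_congr rfl fun i _ => ?_
    field [h.temperature_ne_zero, h'.temperature_ne_zero]
  rw [sum_pdx_sum_mul (h.differentiableAt_relativeViscousStress h')
    (h.differentiableAt_velocity_sub_apply h')]
  simp only [pdx_sub (h.differentiableAt_viscousStress_apply _ _)
      (h'.differentiableAt_viscousStress_apply _ _),
    pdx_sub (h.differentiableAt_velocity_apply _) (h'.differentiableAt_velocity_apply _),
    Finset.sum_sub_distrib, mul_comm _ (v x t _ - v' x t _)]
  linear_combination hdissipation

theorem heat_balance :
    (θ x t - θ' x t)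
        * ((∑ α, pdx α (fun y s => Q y s α / θ y s) x t
            + (∑ α, pdx α θ x t * Q x t α) / θ x t ^ 2)
          - (∑ α, pdx α (fun y s => Q' y s α / θ' y s) x t
            + (∑ α, pdx α θ' x t * Q' x t α) / θ' x t ^ 2))
      - ∑ α, pdx α (fun y s => (θ y s - θ' y s) * (Q y s α / θ y s - Q' y s α / θ' y s)) x t
      = -∑ α, (θ' x t * Q x t α / θ x t - θ x t * Q' x t α / θ' x t)
          * (pdx α θ x t / θ x t - pdx α θ' x t / θ' x t) := by
  have hflux : ∀ α, pdx α (fun y s => (θ y s - θ' y s)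
      * (Q y s α / θ y s - Q' y s α / θ' y s)) x t
      = (pdx α θ x t - pdx α θ' x t) * (Q x t α / θ x t - Q' x t α / θ' x t)
        + (θ x t - θ' x t) * (pdx α (fun y s => Q y s α / θ y s) x t
          - pdx α (fun y s => Q' y s α / θ' y s) x t) := fun α => by
    have hθ := h.differentiableAt_temperature
    have hθ' := h'.differentiableAt_temperature
    have hq := h.differentiableAt_heatFlux_div_temperature α
    have hq' := h'.differentiableAt_heatFlux_div_temperature α
    rw [← pdx_sub hθ hθ', ← pdx_sub hq hq']
    exact pdx_mul (f := fun y s => θ y s - θ' y s)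
      (g := fun y s => Q y s α / θ y s - Q' y s α / θ' y s) (hθ.sub hθ') (hq.sub hq') α
  simp only [hflux, Finset.sum_div, ← Finset.sum_add_distrib, ← Finset.sum_sub_distrib,
    Finset.mul_sum, ← Finset.sum_neg_distrib]
  refine Finset.sum_congr rfl fun α _ => ?_
  field [h.temperature_ne_zero, h'.temperature_ne_zero]

theorem sum_pdx_relativeFlux :
    ∑ α, pdx α (fun y s =>
        (∑ i, (∑ B, (dXi B ψ (ξ y s) (θ y s) - dXi B ψ (ξ' y s) (θ' y s))
          * dPhi B i α (ξ y s).1) * (v y s i - v' y s i))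
        + (∑ i, (Z y s i α - Z' y s i α) * (v y s i - v' y s i))
        + (θ y s - θ' y s) * (Q y s α / θ y s - Q' y s α / θ' y s)) x t
      = ∑ α, pdx α (fun y s => ∑ i, (∑ B, (dXi B ψ (ξ y s) (θ y s)
          - dXi B ψ (ξ' y s) (θ' y s)) * dPhi B i α (ξ y s).1) * (v y s i - v' y s i)) x t
        + ∑ α, pdx α (fun y s => ∑ i, (Z y s i α - Z' y s i α) * (v y s i - v' y s i)) x t
        + ∑ α, pdx α (fun y s =>
            (θ y s - θ' y s) * (Q y s α / θ y s - Q' y s α / θ' y s)) x t := by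
  have hw := h.differentiableAt_velocity_sub_apply h'
  rw [← Finset.sum_add_distrib, ← Finset.sum_add_distrib]
  refine Finset.sum_congr rfl fun α _ => ?_
  have helastic : DifferentiableAt ℝ (Function.uncurry fun y s => ∑ i, (∑ B,
      (dXi B ψ (ξ y s) (θ y s) - dXi B ψ (ξ' y s) (θ' y s)) * dPhi B i α (ξ y s).1)
        * (v y s i - v' y s i)) (x, t) :=
    DifferentiableAt.fun_sum fun i _ =>
      (h.differentiableAt_relativeElasticStress h' i α).mul (hw i)
  have hviscous : DifferentiableAt ℝ (Function.uncurry fun y s =>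
      ∑ i, (Z y s i α - Z' y s i α) * (v y s i - v' y s i)) (x, t) :=
    DifferentiableAt.fun_sum fun i _ =>
      (h.differentiableAt_relativeViscousStress h' i α).mul (hw i)
  have hheat : DifferentiableAt ℝ (Function.uncurry fun y s =>
      (θ y s - θ' y s) * (Q y s α / θ y s - Q' y s α / θ' y s)) (x, t) :=
    (h.differentiableAt_temperature.sub h'.differentiableAt_temperature).mul
      ((h.differentiableAt_heatFlux_div_temperature α).sub
        (h'.differentiableAt_heatFlux_div_temperature α))
  have helastic_viscous : DifferentiableAt ℝ (Function.uncurry fun y s =>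
      (∑ i, (∑ B, (dXi B ψ (ξ y s) (θ y s) - dXi B ψ (ξ' y s) (θ' y s))
        * dPhi B i α (ξ y s).1) * (v y s i - v' y s i))
      + ∑ i, (Z y s i α - Z' y s i α) * (v y s i - v' y s i)) (x, t) :=
    helastic.add hviscous
  rw [pdx_add helastic_viscous hheat, pdx_add helastic hviscous]

theorem sum_velocity_sub_mul_pdt :
    ∑ i, (v x t i - v' x t i)
        * (pdt (fun y s => v y s i) x t - pdt (fun y s => v' y s i) x t)
      = (∑ i, (v x t i - v' x t i) * (∑ α, pdx α (fun y s => SigmaA ψ (ξ y s) (θ y s) i α) x t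
          - ∑ α, pdx α (fun y s => SigmaA ψ (ξ' y s) (θ' y s) i α) x t))
        + ∑ i, (v x t i - v' x t i) * (∑ α, pdx α (fun y s => Z y s i α) x t
          - ∑ α, pdx α (fun y s => Z' y s i α) x t) := by
  rw [← Finset.sum_add_distrib]
  refine Finset.sum_congr rfl fun i _ => ?_
  rw [h.momentum i, h'.momentum i]
  ring

end TwoSolutions

end AugmentedSolutionAt

theorem relative_entropy_identity_general {ψ : Xi → ℝ → ℝ} {ξ ξ' : Vec3 → ℝ → Xi}
    {v v' : Vec3 → ℝ → Vec3} {θ θ' : Vec3 → ℝ → ℝ} {Z Z' : Vec3 → ℝ → Mat3}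
    {Q Q' : Vec3 → ℝ → Vec3} {r r' : Vec3 → ℝ → ℝ} {x : Vec3} {t : ℝ}
    (h : AugmentedSolutionAt ψ ξ v θ Z Q r x t)
    (h' : AugmentedSolutionAt ψ ξ' v' θ' Z' Q' r' x t) :
    pdt (fun y s => relEnt ψ (ξ y s) (v y s) (θ y s) (ξ' y s) (v' y s) (θ' y s)) x t
      - ∑ α, pdx α (fun y s =>
          (∑ i, (∑ B, (dXi B ψ (ξ y s) (θ y s) - dXi B ψ (ξ' y s) (θ' y s))
            * dPhi B i α (ξ y s).1) * (v y s i - v' y s i))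
          + (∑ i, (Z y s i α - Z' y s i α) * (v y s i - v' y s i))
          + (θ y s - θ' y s) * (Q y s α / θ y s - Q' y s α / θ' y s)) x t
      = -(pdt θ' x t) * etaRel ψ (ξ x t) (θ x t) (ξ' x t) (θ' x t)
        + (∑ B, pdt (fun y s => xiComp (ξ' y s) B) x t
            * dXiRel B ψ (ξ x t) (θ x t) (ξ' x t) (θ' x t))
        + (∑ α, ∑ i, ∑ B, pdx α (fun y s => dXi B ψ (ξ' y s) (θ' y s)) x t
            * (dPhi B i α (ξ x t).1 - dPhi B i α (ξ' x t).1) * (v x t i - v' x t i))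
        + (∑ α, ∑ i, pdx α (fun y s => v' y s i) x t
            * ∑ B, (dXi B ψ (ξ x t) (θ x t) - dXi B ψ (ξ' x t) (θ' x t))
              * (dPhi B i α (ξ x t).1 - dPhi B i α (ξ' x t).1))
        - θ x t * θ' x t * (∑ α, ∑ i, (pdx α (fun y s => v y s i) x t / θ x t
              - pdx α (fun y s => v' y s i) x t / θ' x t)
            * (Z x t i α / θ x t - Z' x t i α / θ' x t))
        - (∑ α, (θ' x t * Q x t α / θ x t - θ x t * Q' x t α / θ' x t)
            * (pdx α θ x t / θ x t - pdx α θ' x t / θ' x t))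
        + (θ x t - θ' x t) * (r x t / θ x t - r' x t / θ' x t) := by
  have hentropy := h.entropy
  have hentropy' := h'.entropy
  unfold EntropyIdent at hentropy hentropy'
  rw [h.pdt_relEnt h', h.sum_pdx_relativeFlux h', h.sum_velocity_sub_mul_pdt h']
  linear_combination h.elastic_balance h' + h.viscous_balance h' + h.heat_balance h'
    + (θ x t - θ' x t) * (hentropy - hentropy')

/-- the relative entropy identity (3.8) for two C² solutions
(ξ,v,θ) and (ξ̄,v̄,θ̄) of the augmented thermoviscoelasticity system with
fields (Z,Q,r) and (Z̄,Q̄,r̄), each satisfying its entropy identity. -/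
theorem relative_entropy_identity
    (ψ : Xi → ℝ → ℝ) (hψ : PsiC3 ψ)
    (ξf : Vec3 → ℝ → Xi) (vf : Vec3 → ℝ → Vec3) (θf : Vec3 → ℝ → ℝ)
    (Z : Vec3 → ℝ → Mat3) (Q : Vec3 → ℝ → Vec3) (r : Vec3 → ℝ → ℝ)
    (ξg : Vec3 → ℝ → Xi) (vg : Vec3 → ℝ → Vec3) (θg : Vec3 → ℝ → ℝ)
    (Z' : Vec3 → ℝ → Mat3) (Q' : Vec3 → ℝ → Vec3) (r' : Vec3 → ℝ → ℝ)
    (hreg : FieldC 2 ξf ∧ FieldC 2 vf ∧ FieldC 2 θf)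
    (hreg' : FieldC 2 ξg ∧ FieldC 2 vg ∧ FieldC 2 θg)
    (hZQ : FieldC 1 Z ∧ FieldC 1 Q ∧ Continuous (fun p : Vec3 × ℝ => r p.1 p.2))
    (hZQ' : FieldC 1 Z' ∧ FieldC 1 Q' ∧ Continuous (fun p : Vec3 × ℝ => r' p.1 p.2))
    (hθpos : ∀ (x : Vec3) (t : ℝ), 0 < t → 0 < θf x t)
    (hθpos' : ∀ (x : Vec3) (t : ℝ), 0 < t → 0 < θg x t)
    (hsys : ∀ (x : Vec3) (t : ℝ), 0 < t → AugSys ψ ξf vf θf Z Q r x t)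
    (hsys' : ∀ (x : Vec3) (t : ℝ), 0 < t → AugSys ψ ξg vg θg Z' Q' r' x t)
    (hent : ∀ (x : Vec3) (t : ℝ), 0 < t → EntropyIdent ψ ξf vf θf Z Q r x t)
    (hent' : ∀ (x : Vec3) (t : ℝ), 0 < t → EntropyIdent ψ ξg vg θg Z' Q' r' x t) :
    ∀ (x : Vec3) (t : ℝ), 0 < t →
      pdt (fun y s =>
            psiRel ψ (ξf y s) (θf y s) (ξg y s) (θg y s)
            + (1/2) * (∑ i, (vf y s i - vg y s i)^2)
            + (etaHat ψ (ξf y s) (θf y s) - etaHat ψ (ξg y s) (θg y s))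
                * (θf y s - θg y s)) x t
      - ∑ α, pdx α (fun y s =>
            (∑ i, (∑ B : Idx,
              (dXi B ψ (ξf y s) (θf y s) - dXi B ψ (ξg y s) (θg y s))
                * dPhi B i α (ξf y s).1) * (vf y s i - vg y s i))
            + (∑ i, (Z y s i α - Z' y s i α) * (vf y s i - vg y s i))
            + (θf y s - θg y s) * (Q y s α / θf y s - Q' y s α / θg y s)) x t
      =
      -(pdt θg x t) * etaRel ψ (ξf x t) (θf x t) (ξg x t) (θg x t)
      + (∑ B : Idx, pdt (fun y s => xiComp (ξg y s) B) x t
          * dXiRel B ψ (ξf x t) (θf x t) (ξg x t) (θg x t))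
      + (∑ α, ∑ i, ∑ B : Idx,
          pdx α (fun y s => dXi B ψ (ξg y s) (θg y s)) x t
          * (dPhi B i α (ξf x t).1 - dPhi B i α (ξg x t).1)
          * (vf x t i - vg x t i))
      + (∑ α, ∑ i, pdx α (fun y s => vg y s i) x t
          * (∑ B : Idx, (dXi B ψ (ξf x t) (θf x t) - dXi B ψ (ξg x t) (θg x t))
              * (dPhi B i α (ξf x t).1 - dPhi B i α (ξg x t).1)))
      - θf x t * θg x t * (∑ α, ∑ i,
          (pdx α (fun y s => vf y s i) x t / θf x t
            - pdx α (fun y s => vg y s i) x t / θg x t)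
          * (Z x t i α / θf x t - Z' x t i α / θg x t))
      - (∑ α, (θg x t * Q x t α / θf x t - θf x t * Q' x t α / θg x t)
          * (pdx α θf x t / θf x t - pdx α θg x t / θg x t))
      + (θf x t - θg x t) * (r x t / θf x t - r' x t / θg x t) := fun x t ht =>
  relative_entropy_identity_general
    (.of_augSys hψ hreg.1 hreg.2.1 hreg.2.2 hZQ.1 hZQ.2.1
      (hθpos x t ht) (hsys x t ht) (hent x t ht))
    (.of_augSys hψ hreg'.1 hreg'.2.1 hreg'.2.2 hZQ'.1 hZQ'.2.1
      (hθpos' x t ht) (hsys' x t ht) (hent' x t ht))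

end
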